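/- Let 𝒜 be an abelian category with enough projectives, M an object of 𝒜, and n a positive integer. Then Gpd M ≤ n if and only if for every integer s with 0 ≤ s ≤ n there is an exact sequence 0 → X_n → X_{n−1} → ⋯ → X₁ → X₀ → M → 0 in 𝒜 with X_s Gorenstein projective and X_i projective for every i ≠ s. -/

import Mathlib

/-!
The class of Gorenstein projective objects is described coinductively: `G` is Gorenstein projective
iff it lies in a class `W` of objects each of which is the kernel and the cokernel of a short exact
sequence with projective middle term and other end in `W`, and satisfies `Ext¹(X, Q) = 0` for all
projective `Q` (`IsTotalClass`, `isGorensteinProjective_iff`). Splicing the short exact sequences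
recovers the totally acyclic complex. With this description, closure of the Gorenstein projectives
under extensions (`gp_of_ses`) amounts to checking that the class of extensions of Gorenstein
projectives is again such a class.

Everything else is a diagram chase with pullbacks and pushouts of short exact sequences.
* If `Gpd M ≤ n`, then `M` embeds into an object of projective dimension at most `n` with
  Gorenstein projective cokernel (`exists_hull`). Pushing out `0 → N → G → M → 0` along this
  embedding of `N` gives the resolution with the Gorenstein projective object in place `0`.
* For `0 → N → G → M → 0` and an epimorphism `P → G` from a projective with Gorenstein projective
  kernel `G₁`, the kernel `L` of `P → M` is an extension of `N` by `G₁`, so `Gpd L ≤ n - 1`.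
  Induction applied to `L` places the Gorenstein projective object in any position `s ≥ 1`.

Conversely, projectives are Gorenstein projective, so any of these resolutions bounds `Gpd M`.
-/

open CategoryTheory CategoryTheory.Limits

/-- An object `G` of an abelian category is *Gorenstein projective* if there is an exact
complex `⋯ → P₁ → P₀ → P₋₁ → ⋯` of projective objects (here `d i : P (i+1) ⟶ P i`),
which stays exact after applying `Hom(-, Q)` for every projective `Q`, such that `G` is
isomorphic to the image of the differential `P₀ → P₋₁`. -/
def IsGorensteinProjective {𝒜 : Type*} [Category 𝒜] [Abelian 𝒜] (G : 𝒜) : Prop :=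
  ∃ (P : ℤ → 𝒜) (d : ∀ i : ℤ, P (i + 1) ⟶ P i),
    (∀ i, Projective (P i)) ∧
    (∀ i, ∃ w : d (i + 1) ≫ d i = 0, (ShortComplex.mk (d (i + 1)) (d i) w).Exact) ∧
    (∀ (Q : 𝒜), Projective Q → ∀ i : ℤ,
      Function.Exact (fun g : P i ⟶ Q => d i ≫ g) (fun g : P (i + 1) ⟶ Q => d (i + 1) ≫ g)) ∧
    Nonempty (G ≅ Limits.image (d (-1)))

/-- `GpdLE n M` says that the Gorenstein projective dimension of `M` is at most `n`:
`GpdLE 0 M` iff `M` is Gorenstein projective, and `GpdLE (n+1) M` iff there is a short exact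
sequence `0 → N → G → M → 0` with `G` Gorenstein projective and `GpdLE n N`. -/
def GpdLE {𝒜 : Type*} [Category 𝒜] [Abelian 𝒜] : ℕ → 𝒜 → Prop
  | 0, M => IsGorensteinProjective M
  | n + 1, M => ∃ (N G : 𝒜) (f : N ⟶ G) (g : G ⟶ M) (w : f ≫ g = 0),
      (ShortComplex.mk f g w).ShortExact ∧ IsGorensteinProjective G ∧ GpdLE n N

/-- `ExactSeqTo P n M` says that there is an exact sequence
`0 → X_n → X_{n-1} → ⋯ → X₁ → X₀ → M → 0` such that each `X i` satisfies the predicate `P i`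
(encoded by splitting the exact sequence into short exact sequences). -/
def ExactSeqTo {𝒜 : Type*} [Category 𝒜] [Abelian 𝒜] (P : ℕ → 𝒜 → Prop) : ℕ → 𝒜 → Prop
  | 0, M => ∃ (X : 𝒜) (g : X ⟶ M), IsIso g ∧ P 0 X
  | n + 1, M => ∃ (K X : 𝒜) (f : K ⟶ X) (g : X ⟶ M) (w : f ≫ g = 0),
      (ShortComplex.mk f g w).ShortExact ∧ P 0 X ∧ ExactSeqTo (fun i => P (i + 1)) n K

section

universe v u

variable {𝒜 : Type u} [Category.{v} 𝒜] [Abelian 𝒜]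

/-! ### Short exact sequences, pullbacks and pushouts -/

/-- There exists a short exact sequence `0 → A → B → C → 0`. -/
def SES (A B C : 𝒜) : Prop :=
  ∃ (f : A ⟶ B) (g : B ⟶ C) (w : f ≫ g = 0), (ShortComplex.mk f g w).ShortExact

lemma shortExact_of_lift {A B C : 𝒜} (f : A ⟶ B) (g : B ⟶ C) (w : f ≫ g = 0)
    (hf : Mono f) (hg : Epi g) (h : ∀ {T : 𝒜} (k : T ⟶ B), k ≫ g = 0 → ∃ l : T ⟶ A, l ≫ f = k) :
    (ShortComplex.mk f g w).ShortExact :=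
  ShortComplex.ShortExact.mk' (ShortComplex.exact_of_f_is_kernel _
    (KernelFork.IsLimit.ofι' f w (fun k hk => ⟨(h k hk).choose, (h k hk).choose_spec⟩))) hf hg

lemma exists_lift {A B C T : 𝒜} {f : A ⟶ B} {g : B ⟶ C} {w : f ≫ g = 0}
    (h : (ShortComplex.mk f g w).ShortExact) (k : T ⟶ B) (hk : k ≫ g = 0) :
    ∃ l : T ⟶ A, l ≫ f = k := by
  have : Mono (ShortComplex.mk f g w).f := h.mono_f
  exact ⟨h.exact.lift k hk, h.exact.lift_f k hk⟩

lemma exists_desc {A B C T : 𝒜} {f : A ⟶ B} {g : B ⟶ C} {w : f ≫ g = 0}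
    (h : (ShortComplex.mk f g w).ShortExact) (k : B ⟶ T) (hk : f ≫ k = 0) :
    ∃ l : C ⟶ T, g ≫ l = k := by
  have : Epi (ShortComplex.mk f g w).g := h.epi_g
  exact ⟨h.exact.desc k hk, h.exact.g_desc k hk⟩

lemma shortExact_pullback_snd {A L N G : 𝒜} {i : A ⟶ L} {p : L ⟶ N} {w : i ≫ p = 0}
    (h : (ShortComplex.mk i p w).ShortExact) (q : G ⟶ N) :
    (ShortComplex.mk (pullback.lift i 0 (by simp [w]) : A ⟶ pullback p q)
      (pullback.snd p q) (pullback.lift_snd _ _ _)).ShortExact := by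
  have hi : Mono i := h.mono_f
  have hp : Epi p := h.epi_g
  refine shortExact_of_lift _ _ _ ?_ inferInstance ?_
  · have : Mono ((pullback.lift i 0 (by simp [w]) : A ⟶ pullback p q) ≫ pullback.fst p q) := by
      rwa [pullback.lift_fst]
    exact mono_of_mono _ (pullback.fst p q)
  · intro T k hk
    obtain ⟨l, hl⟩ := exists_lift h (k ≫ pullback.fst p q) (by
      rw [Category.assoc, pullback.condition, reassoc_of% hk, zero_comp])
    refine ⟨l, pullback.hom_ext ?_ ?_⟩ <;>
      simp [pullback.lift_fst, pullback.lift_snd, hl, hk]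

lemma shortExact_pullback_fst {A L N G : 𝒜} {i : A ⟶ G} {q : G ⟶ N} {w : i ≫ q = 0}
    (h : (ShortComplex.mk i q w).ShortExact) (p : L ⟶ N) :
    (ShortComplex.mk (pullback.lift 0 i (by simp [w]) : A ⟶ pullback p q)
      (pullback.fst p q) (pullback.lift_fst _ _ _)).ShortExact := by
  have hi : Mono i := h.mono_f
  have hp : Epi q := h.epi_g
  refine shortExact_of_lift _ _ _ ?_ inferInstance ?_
  · have : Mono ((pullback.lift 0 i (by simp [w]) : A ⟶ pullback p q) ≫ pullback.snd p q) := by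
      rwa [pullback.lift_snd]
    exact mono_of_mono _ (pullback.snd p q)
  · intro T k hk
    obtain ⟨l, hl⟩ := exists_lift h (k ≫ pullback.snd p q) (by
      rw [Category.assoc, ← pullback.condition, reassoc_of% hk, zero_comp])
    refine ⟨l, pullback.hom_ext ?_ ?_⟩ <;>
      simp [pullback.lift_fst, pullback.lift_snd, hl, hk]

/-- The pullback of a subobject `B` of `Y` along an epimorphism `X → Y` is the kernel of the
composite `X → Y → Y / B`. -/
lemma shortExact_pullback_comp {A X Y B Z : 𝒜} {i : A ⟶ X} {p : X ⟶ Y} {w : i ≫ p = 0}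
    (h : (ShortComplex.mk i p w).ShortExact) {m : B ⟶ Y} {q : Y ⟶ Z} {w' : m ≫ q = 0}
    (h' : (ShortComplex.mk m q w').ShortExact) :
    (ShortComplex.mk (pullback.fst p m) (p ≫ q)
      (by rw [pullback.condition_assoc, w', comp_zero])).ShortExact := by
  have hp : Epi p := h.epi_g
  have hm : Mono m := h'.mono_f
  have hq : Epi q := h'.epi_g
  refine shortExact_of_lift _ _ _ inferInstance inferInstance ?_
  intro T k hk
  obtain ⟨l, hl⟩ := exists_lift h' (k ≫ p) (by simpa using hk)
  exact ⟨pullback.lift k l hl.symm, pullback.lift_fst _ _ _⟩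

lemma SES.op {A B C : 𝒜} (h : SES A B C) :
    SES (Opposite.op C) (Opposite.op B) (Opposite.op A) := by
  obtain ⟨f, g, w, h⟩ := h
  exact ⟨g.op, f.op, _, h.op⟩

lemma SES.unop {A B C : 𝒜ᵒᵖ} (h : SES A B C) : SES C.unop B.unop A.unop := by
  obtain ⟨f, g, w, h⟩ := h
  exact ⟨g.unop, f.unop, _, h.unop⟩

/-- The kernel of a composite of epimorphisms is an extension of the kernels. -/
lemma SES.comp_epi {A X Y B Z : 𝒜} (h : SES A X Y) (h' : SES B Y Z) :
    ∃ L, SES A L B ∧ SES L X Z := by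
  obtain ⟨i, p, w, h⟩ := h
  obtain ⟨m, q, w', h'⟩ := h'
  exact ⟨pullback p m, ⟨_, _, _, shortExact_pullback_snd h m⟩,
    ⟨_, _, _, shortExact_pullback_comp h h'⟩⟩

lemma SES.pullback {A L N N' G : 𝒜} (h : SES A L N) (hq : SES N' G N) :
    ∃ E, SES A E G ∧ SES N' E L := by
  obtain ⟨i, p, w, h⟩ := h
  obtain ⟨m, q, w', hq⟩ := hq
  exact ⟨Limits.pullback p q, ⟨_, _, _, shortExact_pullback_snd h q⟩,
    ⟨_, _, _, shortExact_pullback_fst hq p⟩⟩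

/-- The cokernel of a composite of monomorphisms is an extension of the cokernels. -/
lemma SES.comp_mono {A X Y P Z : 𝒜} (h : SES A X Y) (h' : SES X P Z) :
    ∃ L, SES A P L ∧ SES Y L Z := by
  obtain ⟨L, h₁, h₂⟩ := h'.op.comp_epi h.op
  exact ⟨L.unop, h₂.unop, h₁.unop⟩

lemma SES.pushout {N G M L C : 𝒜} (h : SES N G M) (h' : SES N L C) :
    ∃ D, SES G D C ∧ SES L D M := by
  obtain ⟨E, h₁, h₂⟩ := h.op.pullback h'.op
  exact ⟨E.unop, h₂.unop, h₁.unop⟩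

lemma SES.of_splitting {A B C : 𝒜} {f : A ⟶ B} {g : B ⟶ C} {w : f ≫ g = 0}
    (s : (ShortComplex.mk f g w).Splitting) : SES C B A := by
  have hs : s.s ≫ s.r = 0 := s.s_r
  let t : (ShortComplex.mk s.s s.r hs).Splitting :=
    { r := g
      s := f
      f_r := s.s_g
      s_g := s.f_r
      id := by simpa [add_comm] using s.id }
  exact ⟨_, _, _, t.shortExact⟩

lemma SES.symm_of_projective {A B C : 𝒜} (h : SES A B C) (hC : Projective C) : SES C B A := by
  obtain ⟨f, g, w, h⟩ := h
  have : Projective (ShortComplex.mk f g w).X₃ := hC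
  exact SES.of_splitting h.splittingOfProjective

lemma SES.projective {A B C : 𝒜} (h : SES A B C) (hA : Projective A) (hC : Projective C) :
    Projective B := by
  obtain ⟨f, g, w, h⟩ := h
  have : Projective (ShortComplex.mk f g w).X₃ := hC
  have e : B ≅ A ⊞ C := h.splittingOfProjective.isoBinaryBiproduct
  exact Projective.of_iso e.symm inferInstance

/-! ### Vanishing of `Ext¹` into projectives -/

/-- `Ext¹(X, Q) = 0` for all projective `Q`, in elementary form: for every short exact sequence
`0 → A → B → X → 0`, every morphism from `A` to a projective object extends to `B`. -/
def ExtVan (X : 𝒜) : Prop :=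
  ∀ ⦃Q : 𝒜⦄, Projective Q → ∀ ⦃A B : 𝒜⦄ (f : A ⟶ B) (g : B ⟶ X) (w : f ≫ g = 0),
    (ShortComplex.mk f g w).ShortExact → ∀ h : A ⟶ Q, ∃ l : B ⟶ Q, f ≫ l = h

lemma extVan_of_projective {X : 𝒜} (hX : Projective X) : ExtVan X := by
  intro Q _ A B f g w h k
  have : Projective (ShortComplex.mk f g w).X₃ := hX
  let s := h.splittingOfProjective
  have hs : f ≫ s.r = 𝟙 A := s.f_r
  exact ⟨s.r ≫ k, by rw [reassoc_of% hs]⟩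

/-- Extend first over the preimage of `A`, then over the whole middle term. -/
lemma ExtVan.of_ses {A B C : 𝒜} (h : SES A B C) (hA : ExtVan A) (hC : ExtVan C) : ExtVan B := by
  obtain ⟨m, q, w, h⟩ := h
  intro Q hQ U V i p w' h' k
  obtain ⟨l, hl⟩ := hA hQ _ _ _ (shortExact_pullback_snd h' m) k
  obtain ⟨l', hl'⟩ := hC hQ _ _ _ (shortExact_pullback_comp h' h) l
  exact ⟨l', by rw [← hl, ← hl', pullback.lift_fst_assoc]⟩

/-- `Ext¹` may be computed from a single short exact sequence with projective middle term. -/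
lemma extVan_of_shortExact {X' P X : 𝒜} {i : X' ⟶ P} {p : P ⟶ X} {w : i ≫ p = 0}
    (h : (ShortComplex.mk i p w).ShortExact) (hP : Projective P)
    (hext : ∀ Q : 𝒜, Projective Q → ∀ k : X' ⟶ Q, ∃ l : P ⟶ Q, i ≫ l = k) : ExtVan X := by
  intro Q hQ U V f g wV hV k
  -- `0 → U → V ×_X P → P → 0` splits, so `k` extends to `t` on the pullback; `t` is then corrected
  -- by a morphism factoring through `P` so that it vanishes on `X' = ker (V ×_X P → V)`.
  obtain ⟨t, ht⟩ := extVan_of_projective hP hQ _ _ _ (shortExact_pullback_snd hV p) k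
  obtain ⟨e, he⟩ := hext Q hQ (pullback.lift 0 i (by simp [w]) ≫ t)
  obtain ⟨l, hl⟩ := exists_desc (shortExact_pullback_fst h g) (t - pullback.snd g p ≫ e)
    (by rw [Preadditive.comp_sub, pullback.lift_snd_assoc, he, sub_self])
  refine ⟨l, ?_⟩
  have := congrArg (fun z => (pullback.lift f 0 (by simp [wV]) : U ⟶ pullback g p) ≫ z) hl
  simpa [ht, pullback.lift_fst_assoc, pullback.lift_snd_assoc] using this

/-! ### Coinductive description of Gorenstein projectives -/

/-- A class of objects closed under some choice of syzygies and cosyzygies (with respect to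
projectives), all of whose members satisfy `Ext¹(-, Q) = 0` for projective `Q`. -/
structure IsTotalClass (W : 𝒜 → Prop) : Prop where
  syz : ∀ X, W X → ∃ P X', Projective P ∧ W X' ∧ SES X' P X
  cosyz : ∀ X, W X → ∃ P X', Projective P ∧ W X' ∧ SES X P X'
  ext : ∀ X, W X → ExtVan X

lemma shortExact_image {P₂ P₁ P₀ X' X : 𝒜} {d' : P₂ ⟶ P₁} {d : P₁ ⟶ P₀} {w : d' ≫ d = 0}
    (h : (ShortComplex.mk d' d w).Exact) (e' : X' ≅ image d') (e : X ≅ image d) :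
    ∃ w', (ShortComplex.mk (e'.hom ≫ image.ι d') (factorThruImage d ≫ e.inv) w').ShortExact := by
  have w₁ : image.ι d' ≫ factorThruImage d = 0 := by
    rw [← cancel_mono (image.ι d), ← cancel_epi (factorThruImage d')]
    simp [w]
  have w' : (e'.hom ≫ image.ι d') ≫ (factorThruImage d ≫ e.inv) = 0 := by
    simp [reassoc_of% w₁]
  refine ⟨w', ShortComplex.ShortExact.mk' ?_ (mono_comp _ _) (epi_comp _ _)⟩
  let φ : ShortComplex.mk d' (factorThruImage d ≫ e.inv)
      (by rw [← image.fac d', Category.assoc, reassoc_of% w₁]; simp) ⟶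
      ShortComplex.mk (e'.hom ≫ image.ι d') (factorThruImage d ≫ e.inv) w' :=
    { τ₁ := factorThruImage d' ≫ e'.inv
      τ₂ := 𝟙 _
      τ₃ := 𝟙 _ }
  let ψ : ShortComplex.mk d' (factorThruImage d ≫ e.inv)
      (by rw [← image.fac d', Category.assoc, reassoc_of% w₁]; simp) ⟶
      ShortComplex.mk d' d w :=
    { τ₁ := 𝟙 _
      τ₂ := 𝟙 _
      τ₃ := e.hom ≫ image.ι d }
  have i1 : Epi φ.τ₁ := epi_comp _ _
  have i2 : IsIso φ.τ₂ := inferInstanceAs (IsIso (𝟙 _))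
  have i3 : Mono φ.τ₃ := inferInstanceAs (Mono (𝟙 _))
  have j1 : Epi ψ.τ₁ := inferInstanceAs (Epi (𝟙 _))
  have j2 : IsIso ψ.τ₂ := inferInstanceAs (IsIso (𝟙 _))
  have j3 : Mono ψ.τ₃ := mono_comp _ _
  rw [← ShortComplex.exact_iff_of_epi_of_isIso_of_mono φ,
    ShortComplex.exact_iff_of_epi_of_isIso_of_mono ψ]
  exact h

lemma exists_isTotalClass {G : 𝒜} (hG : IsGorensteinProjective G) :
    ∃ W : 𝒜 → Prop, IsTotalClass W ∧ W G := by
  obtain ⟨P, d, hP, hex, hQ, ⟨e⟩⟩ := hG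
  refine ⟨fun X => ∃ i, Nonempty (X ≅ image (d i)), ⟨?_, ?_, ?_⟩, ⟨_, ⟨e⟩⟩⟩
  · rintro X ⟨i, ⟨e⟩⟩
    obtain ⟨w, h⟩ := hex i
    obtain ⟨w', h'⟩ := shortExact_image h (Iso.refl _) e
    exact ⟨_, _, hP (i + 1), ⟨i + 1, ⟨Iso.refl _⟩⟩, _, _, _, h'⟩
  · rintro X ⟨i, ⟨e⟩⟩
    obtain ⟨j, rfl⟩ : ∃ j, i = j + 1 := ⟨i - 1, by ring⟩
    obtain ⟨w, h⟩ := hex j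
    obtain ⟨w', h'⟩ := shortExact_image h e (Iso.refl _)
    exact ⟨_, _, hP (j + 1), ⟨j, ⟨Iso.refl _⟩⟩, _, _, _, h'⟩
  · rintro X ⟨i, ⟨e⟩⟩
    obtain ⟨w, h⟩ := hex i
    obtain ⟨w', h'⟩ := shortExact_image h (Iso.refl _) e
    refine extVan_of_shortExact h' (hP _) fun Q hproj k => ?_
    -- Exactness of `Hom(-, Q)` extends `P (i + 2) → image (d (i + 1)) → Q` along `d (i + 1)`.
    obtain ⟨l, hl⟩ := (hQ Q hproj (i + 1) (factorThruImage (d (i + 1)) ≫ k)).1 (by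
      obtain ⟨w₂, -⟩ := hex (i + 1)
      have : d (i + 1 + 1) ≫ factorThruImage (d (i + 1)) = 0 := by
        rw [← cancel_mono (image.ι _)]
        simpa using w₂
      simp [reassoc_of% this])
    refine ⟨l, ?_⟩
    rw [← cancel_epi (factorThruImage (d (i + 1)))]
    simpa using hl

/-- Splicing the short exact sequences attached to a member of a total class. -/
lemma IsTotalClass.isGorensteinProjective {W : 𝒜 → Prop} (hW : IsTotalClass W) {G : 𝒜}
    (hG : W G) : IsGorensteinProjective G := by
  have hs : ∀ X : {X // W X}, ∃ Y : {X // W X}, ∃ P, Projective P ∧ SES Y.1 P X.1 := by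
    rintro ⟨X, hX⟩
    obtain ⟨P, X', hP, hX', h⟩ := hW.syz X hX
    exact ⟨⟨X', hX'⟩, P, hP, h⟩
  have hc : ∀ X : {X // W X}, ∃ Y : {X // W X}, ∃ P, Projective P ∧ SES X.1 P Y.1 := by
    rintro ⟨X, hX⟩
    obtain ⟨P, X', hP, hX', h⟩ := hW.cosyz X hX
    exact ⟨⟨X', hX'⟩, P, hP, h⟩
  choose s hs using hs
  choose c hc using hc
  -- `X i` is the `i`-th syzygy of `G` for `i ≥ 0` and the `(-i)`-th cosyzygy for `i < 0`.
  let X : ℤ → {X // W X} := fun i => match i with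
    | Int.ofNat n => s^[n] ⟨G, hG⟩
    | Int.negSucc n => c^[n + 1] ⟨G, hG⟩
  have hX : ∀ i : ℤ, ∃ P, Projective P ∧ SES (X (i + 1)).1 P (X i).1 := by
    intro i
    match i with
    | Int.ofNat n =>
      have : X (Int.ofNat n + 1) = s (X (Int.ofNat n)) := Function.iterate_succ_apply' s n _
      rw [this]
      exact hs _
    | Int.negSucc 0 => exact hc ⟨G, hG⟩
    | Int.negSucc (n + 1) =>
      have : X (Int.negSucc (n + 1)) = c (X (Int.negSucc n)) :=
        Function.iterate_succ_apply' c (n + 1) _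
      rw [this]
      exact hc _
  have hX₀ : G = (X (-1 + 1)).1 := rfl
  clear_value X
  choose P hP f g w h using hX
  have hf : ∀ i, Mono (f i) := fun i => (h i).mono_f
  have hg : ∀ i, Epi (g i) := fun i => (h i).epi_g
  have w' : ∀ i, (g (i + 1 + 1) ≫ f (i + 1)) ≫ g (i + 1) ≫ f i = 0 := fun i => by
    rw [Category.assoc, reassoc_of% (w (i + 1)), zero_comp, comp_zero]
  refine ⟨P, fun i => g (i + 1) ≫ f i, hP, fun i => ⟨w' i, ?_⟩, ?_, ?_⟩
  · let φ : ShortComplex.mk (g (i + 1 + 1) ≫ f (i + 1)) (g (i + 1))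
        (by rw [Category.assoc, w, comp_zero]) ⟶ ShortComplex.mk _ _ (w' i) :=
      { τ₁ := 𝟙 _
        τ₂ := 𝟙 _
        τ₃ := f i }
    let ψ : ShortComplex.mk (g (i + 1 + 1) ≫ f (i + 1)) (g (i + 1))
        (by rw [Category.assoc, w, comp_zero]) ⟶ ShortComplex.mk _ _ (w (i + 1)) :=
      { τ₁ := g (i + 1 + 1)
        τ₂ := 𝟙 _
        τ₃ := 𝟙 _ }
    have i1 : Epi φ.τ₁ := inferInstanceAs (Epi (𝟙 _))
    have i2 : IsIso φ.τ₂ := inferInstanceAs (IsIso (𝟙 _))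
    have i3 : Mono φ.τ₃ := hf i
    have j1 : Epi ψ.τ₁ := hg _
    have j2 : IsIso ψ.τ₂ := inferInstanceAs (IsIso (𝟙 _))
    have j3 : Mono ψ.τ₃ := inferInstanceAs (Mono (𝟙 _))
    rw [← ShortComplex.exact_iff_of_epi_of_isIso_of_mono φ,
      ShortComplex.exact_iff_of_epi_of_isIso_of_mono ψ]
    exact (h (i + 1)).exact
  · intro Q hQ i k
    constructor
    · intro hk
      have hk : f (i + 1) ≫ k = 0 := by
        rw [← cancel_epi (g (i + 1 + 1))]
        simpa using hk
      obtain ⟨l, hl⟩ := exists_desc (h (i + 1)) k hk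
      obtain ⟨l', hl'⟩ := hW.ext _ (X i).2 hQ _ _ _ (h i) l
      exact ⟨l', by simp [hl', hl]⟩
    · rintro ⟨l, rfl⟩
      have := w' i
      simp only [Category.assoc] at this
      simp [reassoc_of% this]
  · have hf' : Mono (f (-1)) := hf _
    have hg' : Epi (g (-1 + 1)) := hg _
    have : StrongEpi (g (-1 + 1)) := strongEpi_of_epi _
    exact ⟨eqToIso hX₀ ≪≫ image.isoStrongEpiMono (g (-1 + 1)) (f (-1)) rfl⟩

lemma isGorensteinProjective_iff {G : 𝒜} :
    IsGorensteinProjective G ↔ ∃ W : 𝒜 → Prop, IsTotalClass W ∧ W G :=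
  ⟨exists_isTotalClass, fun ⟨_, hW, hG⟩ => hW.isGorensteinProjective hG⟩

lemma isTotalClass_gp : IsTotalClass (IsGorensteinProjective : 𝒜 → Prop) where
  syz X hX := by
    obtain ⟨W, hW, hX⟩ := exists_isTotalClass hX
    obtain ⟨P, X', hP, hX', h⟩ := hW.syz X hX
    exact ⟨P, X', hP, hW.isGorensteinProjective hX', h⟩
  cosyz X hX := by
    obtain ⟨W, hW, hX⟩ := exists_isTotalClass hX
    obtain ⟨P, X', hP, hX', h⟩ := hW.cosyz X hX
    exact ⟨P, X', hP, hW.isGorensteinProjective hX', h⟩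
  ext X hX := by
    obtain ⟨W, hW, hX⟩ := exists_isTotalClass hX
    exact hW.ext X hX

lemma gp_of_iso {G G' : 𝒜} (e : G ≅ G') (hG : IsGorensteinProjective G) :
    IsGorensteinProjective G' := by
  obtain ⟨P, d, h₁, h₂, h₃, ⟨e'⟩⟩ := hG
  exact ⟨P, d, h₁, h₂, h₃, ⟨e.symm ≪≫ e'⟩⟩

lemma gp_of_projective {P : 𝒜} (hP : Projective P) : IsGorensteinProjective P := by
  have hW : IsTotalClass (fun X : 𝒜 => Projective X) :=
    { syz := fun X hX => ⟨X, ⊥_ 𝒜, hX, initialIsInitial.isZero.projective, 0, 𝟙 X, by simp,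
        (ShortComplex.Splitting.ofIsZeroOfIsIso _ initialIsInitial.isZero
          (IsIso.id X)).shortExact⟩
      cosyz := fun X hX => ⟨X, ⊥_ 𝒜, hX, initialIsInitial.isZero.projective, 𝟙 X, 0, by simp,
        (ShortComplex.Splitting.ofIsIsoOfIsZero _
          (IsIso.id X) initialIsInitial.isZero).shortExact⟩
      ext := fun X hX => extVan_of_projective hX }
  exact hW.isGorensteinProjective hP

/-- Gorenstein projectives are closed under extensions. -/
lemma gp_of_ses {A B C : 𝒜} (h : SES A B C) (hA : IsGorensteinProjective A)
    (hC : IsGorensteinProjective C) : IsGorensteinProjective B := by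
  have hW : IsTotalClass (fun B : 𝒜 => ∃ A C, IsGorensteinProjective A ∧
      IsGorensteinProjective C ∧ SES A B C) := by
    refine ⟨?_, ?_, ?_⟩
    · rintro B ⟨A, C, hA, hC, h⟩
      obtain ⟨PA, A₁, hPA, hA₁, hsA⟩ := isTotalClass_gp.syz A hA
      obtain ⟨PC, C₁, hPC, hC₁, hsC⟩ := isTotalClass_gp.syz C hC
      -- `E = B ×_C PC` is isomorphic to `A ⊞ PC`, and `E'` to `PA ⊞ PC`.
      obtain ⟨E, hE, hE'⟩ := h.pullback hsC
      obtain ⟨E', h₁, h₂⟩ := (hE.symm_of_projective hPC).pullback hsA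
      obtain ⟨L, hL, hL'⟩ := h₂.comp_epi hE'
      exact ⟨E', L, h₁.projective hPC hPA, ⟨A₁, C₁, hA₁, hC₁, hL⟩, hL'⟩
    · rintro B ⟨A, C, hA, hC, h⟩
      obtain ⟨PA, A₁, hPA, hA₁, hsA⟩ := isTotalClass_gp.cosyz A hA
      obtain ⟨PC, C₁, hPC, hC₁, hsC⟩ := isTotalClass_gp.cosyz C hC
      obtain ⟨D, hD, hD'⟩ := h.pushout hsA
      -- `0 → PA → D → C → 0` splits because `Ext¹(C, PA) = 0`.
      have hsplit : SES C D PA := by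
        obtain ⟨f, g, w, hfg⟩ := hD'
        obtain ⟨r, hr⟩ := isTotalClass_gp.ext C hC hPA f g w hfg (𝟙 _)
        exact SES.of_splitting (ShortComplex.Splitting.ofExactOfRetraction _ hfg.exact r hr
          hfg.epi_g)
      obtain ⟨D', h₁, h₂⟩ := hsplit.pushout hsC
      obtain ⟨L, hL, hL'⟩ := hD.comp_mono h₁
      exact ⟨D', L, h₂.projective hPC hPA, ⟨A₁, C₁, hA₁, hC₁, hL'⟩, hL⟩
    · rintro B ⟨A, C, hA, hC, h⟩
      exact ExtVan.of_ses h (isTotalClass_gp.ext A hA) (isTotalClass_gp.ext C hC)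
  exact hW.isGorensteinProjective ⟨A, C, hA, hC, h⟩

/-! ### Gorenstein projective dimension -/

lemma gpdLE_succ_of_ses {n : ℕ} {N G M : 𝒜} (h : SES N G M) (hG : IsGorensteinProjective G)
    (hN : GpdLE n N) : GpdLE (n + 1) M := by
  obtain ⟨f, g, w, h⟩ := h
  exact ⟨N, G, f, g, w, h, hG, hN⟩

lemma exists_ses_of_gpdLE_succ {n : ℕ} {M : 𝒜} (h : GpdLE (n + 1) M) :
    ∃ N G, SES N G M ∧ IsGorensteinProjective G ∧ GpdLE n N := by
  obtain ⟨N, G, f, g, w, h, hG, hN⟩ := h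
  exact ⟨N, G, ⟨f, g, w, h⟩, hG, hN⟩

lemma exactSeqTo_succ_of_ses {R : ℕ → 𝒜 → Prop} {n : ℕ} {K X M : 𝒜} (h : SES K X M) (hX : R 0 X)
    (hK : ExactSeqTo (fun i => R (i + 1)) n K) : ExactSeqTo R (n + 1) M := by
  obtain ⟨f, g, w, h⟩ := h
  exact ⟨K, X, f, g, w, h, hX, hK⟩

lemma gpdLE_of_exactSeqTo (n : ℕ) : ∀ (R : ℕ → 𝒜 → Prop) (M : 𝒜),
    (∀ i X, R i X → IsGorensteinProjective X) → ExactSeqTo R n M → GpdLE n M := by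
  induction n with
  | zero =>
    rintro R M hR ⟨X, g, hg, hX⟩
    exact gp_of_iso (asIso g) (hR 0 X hX)
  | succ n ih =>
    rintro R M hR ⟨K, X, f, g, w, h, hX, hK⟩
    exact ⟨K, X, f, g, w, h, hR 0 X hX, ih _ K (fun i => hR (i + 1)) hK⟩

/-- An object with `Gpd ≤ n` embeds into an object of projective dimension at most `n`, with
Gorenstein projective cokernel. -/
lemma exists_hull (n : ℕ) : ∀ M : 𝒜, GpdLE n M → ∃ L C, SES M L C ∧
    IsGorensteinProjective C ∧ ExactSeqTo (fun _ X => Projective X) n L := by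
  induction n with
  | zero =>
    intro M hM
    obtain ⟨P, C, hP, hC, h⟩ := isTotalClass_gp.cosyz M hM
    exact ⟨P, C, h, hC, P, 𝟙 P, inferInstance, hP⟩
  | succ n ih =>
    intro M hM
    obtain ⟨N, G, h, hG, hN⟩ := exists_ses_of_gpdLE_succ hM
    obtain ⟨L, C, hL, hC, hpd⟩ := ih N hN
    obtain ⟨D, h₁, h₂⟩ := h.pushout hL
    obtain ⟨P, D', hP, hD', h₃⟩ := isTotalClass_gp.cosyz D (gp_of_ses h₁ hG hC)
    obtain ⟨L', h₄, h₅⟩ := h₂.comp_mono h₃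
    exact ⟨L', D', h₅, hD', exactSeqTo_succ_of_ses h₄ hP hpd⟩

lemma gpdLE_of_ses {n : ℕ} {A L N : 𝒜} (h : SES A L N) (hA : IsGorensteinProjective A)
    (hN : GpdLE n N) : GpdLE n L := by
  cases n with
  | zero => exact gp_of_ses h hA hN
  | succ n =>
    obtain ⟨N', G, h', hG, hN'⟩ := exists_ses_of_gpdLE_succ hN
    obtain ⟨E, h₁, h₂⟩ := h.pullback h'
    exact gpdLE_succ_of_ses h₂ (gp_of_ses h₁ hA hG) hN'

lemma exactSeqTo_of_gpdLE (n : ℕ) : ∀ (M : 𝒜) (s : ℕ), s ≤ n → GpdLE n M →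
    ExactSeqTo (fun i X => if i = s then IsGorensteinProjective X else Projective X) n M := by
  induction n with
  | zero =>
    intro M s hs hM
    obtain rfl : s = 0 := by omega
    exact ⟨M, 𝟙 M, inferInstance, by simpa [GpdLE] using hM⟩
  | succ n ih =>
    intro M s hs hM
    obtain ⟨N, G, h, hG, hN⟩ := exists_ses_of_gpdLE_succ hM
    cases s with
    | zero =>
      obtain ⟨L, C, hL, hC, hpd⟩ := exists_hull n N hN
      obtain ⟨D, h₁, h₂⟩ := h.pushout hL
      exact exactSeqTo_succ_of_ses h₂ (by simpa using gp_of_ses h₁ hG hC) (by simpa using hpd)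
    | succ s =>
      obtain ⟨P, G₁, hP, hG₁, h₁⟩ := isTotalClass_gp.syz G hG
      obtain ⟨L, h₂, h₃⟩ := h₁.comp_epi h
      exact exactSeqTo_succ_of_ses h₃ (by simpa using hP)
        (by simpa using ih L s (by omega) (gpdLE_of_ses h₂ hG₁ hN))

end

/-- **Theorem 3.11.** For an object `M` of an abelian category with enough projectives and a
positive integer `n`, one has `Gpd M ≤ n` iff for every `s` with `0 ≤ s ≤ n` there is an exact
sequence `0 → X_n → ⋯ → X₁ → X₀ → M → 0` with `X_s` Gorenstein projective and `X_i`
projective for all `i ≠ s`. -/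
theorem gpd_le_iff {𝒜 : Type*} [Category 𝒜] [Abelian 𝒜] [EnoughProjectives 𝒜]
    (M : 𝒜) (n : ℕ) (hn : 0 < n) :
    GpdLE n M ↔ ∀ s : ℕ, s ≤ n →
      ExactSeqTo (fun i X => if i = s then IsGorensteinProjective X else Projective X) n M := by
  refine ⟨fun h s hs => exactSeqTo_of_gpdLE n M s hs h, fun h => ?_⟩
  refine gpdLE_of_exactSeqTo n _ M (fun i X hX => ?_) (h 0 (Nat.zero_le n))
  split_ifs at hX
  · exact hX
  · exact gp_of_projective hX
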